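/- arXiv:0802.0823 — 4 statements merged into one kernel-verified Lean document; each statement's English description precedes it below -/
import Mathlib

section
/- Let G be a k×n matrix over 𝔽₂ of rank k with row space C, where n ≥ 2. If d_min(C) ≥ 3, then the unnormalized information function satisfies ẽ_{n−2} = k·n·(n−1)/2; if instead d_min(C) = 2, then ẽ_{n−2} < k·n·(n−1)/2. -/
/-!
Puncturing argument. A submatrix `G_S` has full row rank `k` exactly when no nonzero message `u`
satisfies `u G_S = 0` (`rank_eq_iff_vecMul`), that is, when no nonzero codeword `c = u G` is
supported on the complement of `S`. For `|S| = n - 2` that complement has two elements. If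
`d_min ≥ 3`, every one of the `n.choose 2` summands of `infoFun G (n - 2)` therefore equals `k`.
If `d_min = 2`, all summands are at most `k`, and the one indexed by the complement of the support
of a codeword of weight two is strictly smaller.
-/

/-- The minimum distance of a code `C`: the minimum Hamming weight of a nonzero codeword. -/
noncomputable def dmin {ι : Type*} [Fintype ι] (C : Set (ι → ZMod 2)) : ℕ :=
  sInf {w | ∃ c ∈ C, c ≠ 0 ∧ hammingNorm c = w}

/-- The `g`-th unnormalized information function of a `k × n` matrix `G` over `𝔽₂`:
the sum, over all `g`-element subsets `S` of the column indices, of the rank of the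
submatrix of `G` formed by the columns indexed by `S`. -/
noncomputable def infoFun {k n : ℕ} (G : Matrix (Fin k) (Fin n) (ZMod 2)) (g : ℕ) : ℕ :=
  ∑ S ∈ Finset.powersetCard g (Finset.univ : Finset (Fin n)),
    (G.submatrix id (fun j : {x // x ∈ S} => (j : Fin n))).rank

/-- Full row rank means that the encoding map `u ↦ u M` has trivial kernel. -/
theorem rank_eq_iff_vecMul {k : ℕ} {ι : Type*} [Fintype ι]
    (M : Matrix (Fin k) ι (ZMod 2)) :
    M.rank = k ↔ ∀ u : Fin k → ZMod 2, Matrix.vecMul u M = 0 → u = 0 := by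
  have hlin : M.rank = k ↔ LinearIndependent (ZMod 2) M.row := by
    rw [linearIndependent_iff_card_eq_finrank_span, Matrix.rank_eq_finrank_span_row,
      Fintype.card_fin]
    exact eq_comm
  rw [hlin, ← Matrix.vecMul_injective_iff]
  exact injective_iff_map_eq_zero (Matrix.vecMulLinear M)

theorem vecMul_submatrix_apply {k n : ℕ} (G : Matrix (Fin k) (Fin n) (ZMod 2))
    (u : Fin k → ZMod 2) (S : Finset (Fin n)) (j : {x // x ∈ S}) :
    Matrix.vecMul u (G.submatrix id (fun j : {x // x ∈ S} => (j : Fin n))) j =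
      Matrix.vecMul u G j := rfl

theorem sum_const_powersetCard_sub_two {k n : ℕ} (hn : 2 ≤ n) :
    ∑ _S ∈ Finset.powersetCard (n - 2) (Finset.univ : Finset (Fin n)), k =
      k * n * (n - 1) / 2 := by
  rw [Finset.sum_const, Finset.card_powersetCard, Finset.card_univ, Fintype.card_fin,
    Nat.choose_symm hn, Nat.choose_two_right, smul_eq_mul, mul_assoc,
    Nat.mul_div_assoc _ (Nat.even_mul_pred_self n).two_dvd, mul_comm]

/-- For a full-rank `k × n` generator matrix `G` over `𝔽₂` (`n ≥ 2`) with
row space `C`: if `d_min(C) ≥ 3` then `ẽ_{n-2} = k·n·(n-1)/2`, and if `d_min(C) = 2`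
then `ẽ_{n-2} < k·n·(n-1)/2`. -/
theorem infoFun_sub_two_dmin
    {k n : ℕ} (hk : 1 ≤ k) (hkn : k ≤ n) (hn : 2 ≤ n)
    (G : Matrix (Fin k) (Fin n) (ZMod 2)) (hG : G.rank = k) :
    (3 ≤ dmin {c | ∃ u : Fin k → ZMod 2, c = Matrix.vecMul u G} →
        infoFun G (n - 2) = k * n * (n - 1) / 2) ∧
      (dmin {c | ∃ u : Fin k → ZMod 2, c = Matrix.vecMul u G} = 2 →
        infoFun G (n - 2) < k * n * (n - 1) / 2) := by
  have hinj := (rank_eq_iff_vecMul G).1 hG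
  constructor
  · intro hd
    rw [← sum_const_powersetCard_sub_two hn]
    refine Finset.sum_congr rfl fun S hS => (rank_eq_iff_vecMul _).2 fun u hu => ?_
    rw [Finset.mem_powersetCard_univ] at hS
    by_contra hne
    have hle : hammingNorm (Matrix.vecMul u G) ≤ 2 := by
      calc hammingNorm (Matrix.vecMul u G) ≤ Sᶜ.card := by
            refine Finset.card_le_card fun j hj => ?_
            rw [Finset.mem_compl]
            intro hjS
            exact (Finset.mem_filter.1 hj).2 (congrFun hu ⟨j, hjS⟩)
        _ = 2 := by rw [Finset.card_compl, Fintype.card_fin, hS]; omega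
    have hmin : dmin {c | ∃ u : Fin k → ZMod 2, c = Matrix.vecMul u G} ≤
        hammingNorm (Matrix.vecMul u G) :=
      Nat.sInf_le ⟨_, ⟨u, rfl⟩, fun h => hne (hinj u h), rfl⟩
    omega
  · intro hd
    -- The set of weights is nonempty, since otherwise its infimum would be `0`.
    have hmem := Nat.sInf_mem (Nat.nonempty_of_pos_sInf (hd.symm ▸ Nat.two_pos :
      0 < dmin {c | ∃ u : Fin k → ZMod 2, c = Matrix.vecMul u G}))
    obtain ⟨c, ⟨u, rfl⟩, hc0, hw⟩ := hmem
    replace hw : hammingNorm (Matrix.vecMul u G) = 2 := hw.trans hd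
    have hle : ∀ S : Finset (Fin n),
        (G.submatrix id (fun j : {x // x ∈ S} => (j : Fin n))).rank ≤ k := fun S => by
      simpa using Matrix.rank_le_card_height
        (G.submatrix id (fun j : {x // x ∈ S} => (j : Fin n)))
    rw [← sum_const_powersetCard_sub_two hn]
    refine Finset.sum_lt_sum (fun S _ => hle S)
      ⟨(Finset.univ.filter fun j => Matrix.vecMul u G j ≠ 0)ᶜ, ?_, lt_of_le_of_ne (hle _) ?_⟩
    · rw [Finset.mem_powersetCard_univ, Finset.card_compl, Fintype.card_fin]
      exact congrArg (n - ·) hw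
    · intro hrank
      have hu : u = 0 := (rank_eq_iff_vecMul _).1 hrank u <| funext fun j => by
        rw [vecMul_submatrix_apply]
        simpa using j.2
      exact hc0 (by rw [hu, Matrix.zero_vecMul])
end

section
/- Let G be a k×n matrix over 𝔽₂ of rank k with row space C, where n ≥ 2 and d_min(C) = 2. Then Δ_{n−2} := k·n·(n−1)/2 − ẽ_{n−2} equals A_2, the number of Hamming-weight-2 codewords of C. -/
/-- The binary vector vanishing exactly on `S`: the indicator of the complement of `S`. -/
def coIndicator {n : ℕ} (S : Finset (Fin n)) : Fin n → ZMod 2 :=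
  fun i => if i ∈ S then 0 else 1

lemma coIndicator_injective {n : ℕ} :
    Function.Injective (coIndicator : Finset (Fin n) → Fin n → ZMod 2) := by
  intro S T h
  ext i
  have hi := congrFun h i
  unfold coIndicator at hi
  by_cases hS : i ∈ S <;> by_cases hT : i ∈ T <;> simp_all

lemma hammingNorm_coIndicator {n : ℕ} (S : Finset (Fin n)) :
    hammingNorm (coIndicator S) = n - S.card := by
  have h : Finset.univ.filter (fun i => coIndicator S i ≠ 0) = Sᶜ := by
    ext i
    simp [coIndicator]
  rw [hammingNorm, h, Finset.card_compl, Fintype.card_fin]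

/-- A binary vector is determined by its zero set. -/
lemma eq_coIndicator_zeros {n : ℕ} (c : Fin n → ZMod 2) :
    c = coIndicator (Finset.univ.filter (fun i => c i = 0)) := by
  funext i
  by_cases h : c i = 0
  · simp [coIndicator, h]
  · simp only [coIndicator, Finset.mem_filter, Finset.mem_univ, true_and, h, if_false]
    exact Fin.eq_one_of_ne_zero _ h

lemma card_zeros_add_hammingNorm {n : ℕ} (c : Fin n → ZMod 2) :
    (Finset.univ.filter (fun i => c i = 0)).card + hammingNorm c = n := by
  have := Finset.card_filter_add_card_filter_not (s := (Finset.univ : Finset (Fin n)))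
    (fun i => c i = 0)
  simpa [hammingNorm] using this

/-- Rank-nullity for the map `u ↦ u ᵥ* A`. -/
lemma rank_add_finrank_ker_vecMul {k : ℕ} {m : Type*} [Fintype m]
    (A : Matrix (Fin k) m (ZMod 2)) :
    A.rank + Module.finrank (ZMod 2) (LinearMap.ker A.vecMulLinear) = k := by
  have h := LinearMap.finrank_range_add_finrank_ker A.vecMulLinear
  rw [Module.finrank_fin_fun] at h
  rw [← Matrix.rank_transpose, Matrix.rank, Matrix.mulVecLin_transpose]
  exact h

lemma vecMul_eq_zero_iff {k n : ℕ} (G : Matrix (Fin k) (Fin n) (ZMod 2)) (hG : G.rank = k)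
    (u : Fin k → ZMod 2) : Matrix.vecMul u G = 0 ↔ u = 0 := by
  have h := rank_add_finrank_ker_vecMul G
  have h0 : Module.finrank (ZMod 2) (LinearMap.ker G.vecMulLinear) = 0 := by omega
  rw [Submodule.finrank_eq_zero] at h0
  rw [← Matrix.vecMulLinear_apply, ← LinearMap.mem_ker, h0, Submodule.mem_bot]

/-- If all nonzero codewords have weight at least `2`, then deleting two columns lowers the rank
by one exactly when the indicator of the deleted pair is a codeword, and otherwise preserves it. -/
lemma rank_add_ite {k n : ℕ} (hn : 2 ≤ n) (G : Matrix (Fin k) (Fin n) (ZMod 2))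
    (hG : G.rank = k)
    (hw : ∀ u : Fin k → ZMod 2, u ≠ 0 → 2 ≤ hammingNorm (Matrix.vecMul u G))
    (S : Finset (Fin n)) (hS : S.card = n - 2)
    [Decidable (∃ u : Fin k → ZMod 2, coIndicator S = Matrix.vecMul u G)] :
    (G.submatrix id (fun j : {x // x ∈ S} => (j : Fin n))).rank +
      (if ∃ u : Fin k → ZMod 2, coIndicator S = Matrix.vecMul u G then 1 else 0) = k := by
  set A := G.submatrix id (fun j : {x // x ∈ S} => (j : Fin n)) with hA
  have hker : ∀ u, u ∈ LinearMap.ker A.vecMulLinear ↔ ∀ i ∈ S, Matrix.vecMul u G i = 0 := by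
    intro u
    rw [LinearMap.mem_ker, funext_iff, Subtype.forall]
    exact Iff.rfl
  have hcod : ∀ u ∈ LinearMap.ker A.vecMulLinear, u ≠ 0 → coIndicator S = Matrix.vecMul u G := by
    intro u hu h0
    have hsub : S ⊆ Finset.univ.filter (fun i => Matrix.vecMul u G i = 0) := by
      intro i hi
      simpa using (hker u).1 hu i hi
    have h2 := hw u h0
    have h3 := card_zeros_add_hammingNorm (Matrix.vecMul u G)
    rw [Finset.eq_of_subset_of_card_le hsub (by omega), ← eq_coIndicator_zeros]
  have hrn := rank_add_finrank_ker_vecMul A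
  split_ifs with hP
  · obtain ⟨v, hv⟩ := hP
    have hv0 : v ≠ 0 := by
      rintro rfl
      have h := hammingNorm_coIndicator S
      rw [hv, Matrix.zero_vecMul, hammingNorm_zero] at h
      omega
    have hspan : LinearMap.ker A.vecMulLinear = Submodule.span (ZMod 2) {v} := by
      apply le_antisymm
      · intro u hu
        by_cases h0 : u = 0
        · simp [h0]
        · have huv : Matrix.vecMul (u - v) G = 0 := by
            rw [Matrix.sub_vecMul, ← hcod u hu h0, ← hv, sub_self]
          rw [vecMul_eq_zero_iff G hG, sub_eq_zero] at huv
          rw [huv]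
          exact Submodule.mem_span_singleton_self v
      · rw [Submodule.span_singleton_le_iff_mem, hker]
        intro i hi
        rw [← hv]
        simp [coIndicator, hi]
    rwa [hspan, finrank_span_singleton hv0] at hrn
  · have hbot : LinearMap.ker A.vecMulLinear = ⊥ := by
      rw [Submodule.eq_bot_iff]
      intro u hu
      by_contra h0
      exact hP ⟨u, hcod u hu h0⟩
    rwa [hbot, finrank_bot] at hrn

open Classical in
/-- Weight-2 codewords correspond to their zero sets, of size `n - 2`. -/
lemma ncard_weight_two {k n : ℕ} (hn : 2 ≤ n) (G : Matrix (Fin k) (Fin n) (ZMod 2)) :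
    Set.ncard {c : Fin n → ZMod 2 |
        (∃ u : Fin k → ZMod 2, c = Matrix.vecMul u G) ∧ hammingNorm c = 2} =
      ((Finset.powersetCard (n - 2) (Finset.univ : Finset (Fin n))).filter
        (fun S => ∃ u : Fin k → ZMod 2, coIndicator S = Matrix.vecMul u G)).card := by
  rw [← Set.ncard_coe_finset, ← Set.ncard_image_of_injective _ coIndicator_injective]
  congr 1
  ext c
  simp only [Set.mem_ofPred_eq, Set.mem_image, Finset.mem_coe, Finset.mem_filter,
    Finset.mem_powersetCard, Finset.subset_univ, true_and]
  constructor
  · rintro ⟨hc, h2⟩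
    refine ⟨Finset.univ.filter (fun i => c i = 0), ⟨?_, ?_⟩, (eq_coIndicator_zeros c).symm⟩
    · have := card_zeros_add_hammingNorm c
      omega
    · rwa [← eq_coIndicator_zeros]
  · rintro ⟨S, ⟨hS, hc⟩, rfl⟩
    refine ⟨hc, ?_⟩
    rw [hammingNorm_coIndicator]
    omega

/-- Theorem 2 of the paper: For a full-rank `k × n` generator matrix `G`
over `𝔽₂` (`n ≥ 2`) whose row space `C` has minimum distance `2`,
`Δ_{n-2} := k·n·(n-1)/2 − ẽ_{n-2}` equals `A₂`, the number of weight-2 codewords of `C`. -/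
theorem delta_eq_A2
    {k n : ℕ} (hk : 1 ≤ k) (hkn : k ≤ n) (hn : 2 ≤ n)
    (G : Matrix (Fin k) (Fin n) (ZMod 2)) (hG : G.rank = k)
    (hd : dmin {c | ∃ u : Fin k → ZMod 2, c = Matrix.vecMul u G} = 2) :
    k * n * (n - 1) / 2 - infoFun G (n - 2) =
      Set.ncard {c : Fin n → ZMod 2 |
        (∃ u : Fin k → ZMod 2, c = Matrix.vecMul u G) ∧ hammingNorm c = 2} := by
  classical
  have hw : ∀ u : Fin k → ZMod 2, u ≠ 0 → 2 ≤ hammingNorm (Matrix.vecMul u G) := by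
    intro u hu
    refine hd.ge.trans ?_
    exact Nat.sInf_le ⟨_, ⟨u, rfl⟩, mt (vecMul_eq_zero_iff G hG u).1 hu, rfl⟩
  have hsum : infoFun G (n - 2) +
      ((Finset.powersetCard (n - 2) (Finset.univ : Finset (Fin n))).filter
        (fun S => ∃ u : Fin k → ZMod 2, coIndicator S = Matrix.vecMul u G)).card =
      n.choose 2 * k := by
    rw [infoFun, Finset.card_filter, ← Finset.sum_add_distrib,
      Finset.sum_congr rfl fun S hS =>
        rank_add_ite hn G hG hw S (Finset.mem_powersetCard.1 hS).2,
      Finset.sum_const, Finset.card_powersetCard, Finset.card_univ, Fintype.card_fin,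
      Nat.choose_symm hn, smul_eq_mul]
  have hchoose : k * n * (n - 1) / 2 = n.choose 2 * k := by
    rw [Nat.choose_two_right, mul_assoc, Nat.mul_div_assoc _ (Nat.even_mul_pred_self n).two_dvd,
      mul_comm]
  rw [ncard_weight_two hn, hchoose, ← hsum, Nat.add_sub_cancel_left]
end

section
/- Let n ≥ 2 and let G be the (n−1)×n matrix over 𝔽₂ whose i-th row is e_i + e_{i+1} (the cyclic-form generator matrix of the length-n single parity-check code, with two consecutive ones per row). Then for every 1 ≤ u ≤ n−1, the number A_{2,u} of weight-2 codewords of the row space of G whose information word has Hamming weight u equals n − u. Equivalently, an information word u ∈ 𝔽₂^{n−1} generates a weight-2 codeword if and only if its '1' positions form a nonempty contiguous block. -/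
/-!
Pad an information word `v` of length `m = n - 1` with a zero on either side, giving a sequence
`X 0 = 0, X (i + 1) = v i, X (m + 1) = 0`. The codeword `v G` is then the difference sequence
`j ↦ X j + X (j + 1)` of `X` (`vecMul_eq_pad`), so its weight counts the places where `X` changes
value. There are exactly two changes, at `a < b`, if and only if the support of `v` is the
nonempty block `a ≤ i < b` (`hammingNorm_vecMul_eq_two_iff`). Such a `v` has weight `b - a`, so the
weight-`u` words in question are parametrized by their starting point `a`, with `a + u ≤ m`, which
leaves `n - u` choices.
-/

/-- `A_{2,u}`: the number of weight-2 codewords of the row space of `G` whose (unique)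
information word has Hamming weight `u`. -/
noncomputable def A2u {k n : ℕ} (G : Matrix (Fin k) (Fin n) (ZMod 2)) (u : ℕ) : ℕ :=
  Set.ncard {v : Fin k → ZMod 2 |
    hammingNorm (Matrix.vecMul v G) = 2 ∧ hammingNorm v = u}

/-- The information word `v`, shifted by one and extended by zero: `pad v (i + 1) = v i`, and
`pad v k = 0` for `k = 0` and for `k > m`. -/
def pad {m : ℕ} (v : Fin m → ZMod 2) (k : ℕ) : ZMod 2 :=
  ∑ i : Fin m, if k = (i : ℕ) + 1 then v i else 0

/-- The indicator word of the contiguous block of positions `a ≤ i < b`. -/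
def block (m a b : ℕ) : Fin m → ZMod 2 :=
  fun i => if a ≤ (i : ℕ) ∧ (i : ℕ) < b then 1 else 0

lemma pad_zero {m : ℕ} (v : Fin m → ZMod 2) : pad v 0 = 0 := by
  simp [pad]

lemma pad_succ {m : ℕ} (v : Fin m → ZMod 2) (i : Fin m) : pad v ((i : ℕ) + 1) = v i := by
  simp [pad, ← Fin.ext_iff]

lemma pad_of_lt {m : ℕ} (v : Fin m → ZMod 2) {k : ℕ} (hk : m < k) : pad v k = 0 := by
  refine Finset.sum_eq_zero fun i _ => if_neg ?_
  have := i.isLt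
  omega

lemma vecMul_eq_pad {m : ℕ} {G : Matrix (Fin m) (Fin (m + 1)) (ZMod 2)}
    (hG : ∀ (i : Fin m) (j : Fin (m + 1)),
      G i j = if (j : ℕ) = (i : ℕ) ∨ (j : ℕ) = (i : ℕ) + 1 then 1 else 0)
    (v : Fin m → ZMod 2) (j : Fin (m + 1)) :
    Matrix.vecMul v G j = pad v j + pad v ((j : ℕ) + 1) := by
  simp only [Matrix.vecMul, dotProduct, pad, ← Finset.sum_add_distrib, hG]
  refine Finset.sum_congr rfl fun i _ => ?_
  by_cases h1 : (j : ℕ) = i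
  · simp [h1]
  · by_cases h2 : (j : ℕ) = (i : ℕ) + 1 <;> simp [h1, h2]

lemma pad_block {m a b : ℕ} (hb : b ≤ m) (k : ℕ) :
    pad (block m a b) k = if a < k ∧ k ≤ b then 1 else 0 := by
  rcases k with _ | k
  · simp [pad_zero]
  · by_cases hk : k < m
    · rw [pad_succ _ ⟨k, hk⟩]
      simp only [block]
      congr 1
      apply propext
      omega
    · rw [pad_of_lt _ (by omega), if_neg (by omega)]

lemma hammingNorm_block {m a b : ℕ} (hb : b ≤ m) : hammingNorm (block m a b) = b - a := by
  have h : (Finset.univ.filter fun i => block m a b i ≠ 0).map Fin.valEmbedding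
      = Finset.Ico a b := by
    ext k
    simp only [Finset.mem_map, Finset.mem_filter, Finset.mem_univ, true_and, block,
      Fin.valEmbedding_apply, Finset.mem_Ico, ne_eq, ite_eq_right_iff, one_ne_zero, imp_false,
      not_not]
    exact ⟨by rintro ⟨i, hi, rfl⟩; exact hi, fun hk => ⟨⟨k, by omega⟩, hk, rfl⟩⟩
  rw [hammingNorm, ← Finset.card_map, h, Nat.card_Ico]

/-- An information word generates a weight-2 codeword if and only if its support is a nonempty
contiguous block. -/
lemma hammingNorm_vecMul_eq_two_iff {m : ℕ} {G : Matrix (Fin m) (Fin (m + 1)) (ZMod 2)}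
    (hG : ∀ (i : Fin m) (j : Fin (m + 1)),
      G i j = if (j : ℕ) = (i : ℕ) ∨ (j : ℕ) = (i : ℕ) + 1 then 1 else 0)
    (v : Fin m → ZMod 2) :
    hammingNorm (Matrix.vecMul v G) = 2 ↔ ∃ a b, a < b ∧ b ≤ m ∧ v = block m a b := by
  constructor
  · intro h
    obtain ⟨p, q, hpq, hs⟩ := Finset.card_eq_two.mp h
    wlog hlt : p < q generalizing p q
    · exact this q p hpq.symm (by rw [hs, Finset.pair_comm])
        (lt_of_le_of_ne (not_lt.mp hlt) hpq.symm)
    have hlt' : (p : ℕ) < q := hlt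
    have hc : ∀ j : Fin (m + 1),
        pad v j + pad v ((j : ℕ) + 1) = if (j : ℕ) = p ∨ (j : ℕ) = q then 1 else 0 := by
      intro j
      have hj := Finset.ext_iff.mp hs j
      simp only [Finset.mem_filter, Finset.mem_univ, true_and, Finset.mem_insert,
        Finset.mem_singleton, vecMul_eq_pad hG, Fin.ext_iff] at hj
      have key : ∀ x : ZMod 2, x ≠ 0 → x = 1 := by decide
      split_ifs with hpq'
      · exact key _ (hj.mpr hpq')
      · exact not_not.mp (mt hj.mp hpq')
    -- Summing the differences from the left end recovers the padded word.
    have hX : ∀ k, k ≤ m + 1 → pad v k = if (p : ℕ) < k ∧ k ≤ (q : ℕ) then 1 else 0 := by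
      intro k
      induction k with
      | zero => simp [pad_zero]
      | succ k ih =>
        intro hk
        have h1 := hc ⟨k, by omega⟩
        simp only [ih (by omega)] at h1
        generalize pad v (k + 1) = x at h1 ⊢
        revert h1 x
        split_ifs <;> first | omega | decide
    refine ⟨p, q, hlt', Nat.lt_succ_iff.mp q.isLt, funext fun i => ?_⟩
    rw [← pad_succ v i, ← pad_succ (block m p q) i, hX _ (by omega),
      pad_block (Nat.lt_succ_iff.mp q.isLt)]
  · rintro ⟨a, b, hab, hb, rfl⟩
    refine Finset.card_eq_two.mpr ⟨⟨a, by omega⟩, ⟨b, by omega⟩, ?_, ?_⟩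
    · simp only [ne_eq, Fin.mk.injEq]
      omega
    · ext j
      simp only [Finset.mem_filter, Finset.mem_univ, true_and, Finset.mem_insert,
        Finset.mem_singleton, vecMul_eq_pad hG, pad_block hb, Fin.ext_iff]
      have h11 : (1 + 1 : ZMod 2) = 0 := by decide
      split_ifs <;> simp [h11] <;> omega

lemma block_left_injective {m u a a' : ℕ} (hu : 1 ≤ u) (ha : a + u ≤ m) (ha' : a' + u ≤ m)
    (h : block m a (a + u) = block m a' (a' + u)) : a = a' := by
  have h1 := congrFun h ⟨a, by omega⟩
  have h2 := congrFun h ⟨a', by omega⟩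
  simp only [block] at h1 h2
  split_ifs at h1 h2 <;> first | omega | exact absurd h1 (by decide) | exact absurd h2 (by decide)

lemma A2u_eq {m u : ℕ} {G : Matrix (Fin m) (Fin (m + 1)) (ZMod 2)}
    (hG : ∀ (i : Fin m) (j : Fin (m + 1)),
      G i j = if (j : ℕ) = (i : ℕ) ∨ (j : ℕ) = (i : ℕ) + 1 then 1 else 0)
    (hu : 1 ≤ u) : A2u G u = m + 1 - u := by
  have hset : {v : Fin m → ZMod 2 | hammingNorm (Matrix.vecMul v G) = 2 ∧ hammingNorm v = u}
      = (fun a => block m a (a + u)) '' (Finset.range (m + 1 - u) : Set ℕ) := by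
    ext v
    simp only [Set.mem_ofPred_eq, Set.mem_image, Finset.mem_coe, Finset.mem_range,
      hammingNorm_vecMul_eq_two_iff hG]
    constructor
    · rintro ⟨⟨a, b, hab, hb, rfl⟩, hw⟩
      rw [hammingNorm_block hb] at hw
      exact ⟨a, by omega, by rw [← hw, Nat.add_sub_cancel' hab.le]⟩
    · rintro ⟨a, ha, rfl⟩
      exact ⟨⟨a, a + u, by omega, by omega, rfl⟩, by
        rw [hammingNorm_block (by omega), Nat.add_sub_cancel_left]⟩
  have hinj : Set.InjOn (fun a => block m a (a + u)) (Finset.range (m + 1 - u) : Set ℕ) := by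
    intro a ha a' ha' h
    simp only [Finset.coe_range, Set.mem_Iio] at ha ha'
    exact block_left_injective hu (by omega) (by omega) h
  rw [A2u, hset, hinj.ncard_image, Set.ncard_coe_finset, Finset.card_range]

/-- For the cyclic-form generator matrix `G` of the length-`n` single
parity-check code (`n ≥ 2`), with `G i j = 1` iff `j = i` or `j = i + 1`, the number
`A_{2,u}` of weight-2 codewords generated by weight-`u` information words equals
`n - u` for every `1 ≤ u ≤ n - 1`. -/
theorem A2u_spc_cyclic (n : ℕ) (hn : 2 ≤ n)
    (G : Matrix (Fin (n - 1)) (Fin n) (ZMod 2))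
    (hGdef : ∀ (i : Fin (n - 1)) (j : Fin n),
      G i j = if (j : ℕ) = (i : ℕ) ∨ (j : ℕ) = (i : ℕ) + 1 then 1 else 0) :
    ∀ u : ℕ, 1 ≤ u → u ≤ n - 1 → A2u G u = n - u := by
  intro u hu _
  obtain ⟨m, rfl⟩ : ∃ m, n = m + 1 := ⟨n - 1, by omega⟩
  exact A2u_eq hGdef hu
end

section
/- For an integer n > 3, define the real polynomials P_s(x) = (2(n−1)/n)·x·(1 + ((n−2)/2)·x) and P_c(x) = Σ_{u=1}^{n−1} (2(n−u)/n)·x^u. Then P_s(x) − P_c(x) > 0 for all real x with 0 < x < 1, P_s(1) − P_c(1) = 0, and P_s(x) − P_c(x) < 0 for all real x > 1. -/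
/-!
Both polynomials have the same linear coefficient, and the quadratic coefficient of `P_s` is the sum
of all coefficients of `P_c` of degree at least two, since `∑_{u=2}^{n-1} (n - u) = (n-1)(n-2)/2`.
Hence `P_s(x) - P_c(x) = (2/n) ∑_{u=2}^{n-1} (n - u) (x^2 - x^u)`
(`systematic_sub_cyclic_eq`, with `n = k + 2` and `u = j + 2`). Every weight is positive and every
`x^2 - x^u` has the sign of `1 - x`, strictly as soon as `u ≥ 3`; such a `u` occurs because `n > 3`.
-/

lemma sum_range_const_sub (a : ℝ) (k : ℕ) :
    ∑ j ∈ Finset.range k, (a - j) = a * k - k * (k - 1) / 2 := by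
  induction k with
  | zero => simp
  | succ k ih => rw [Finset.sum_range_succ, ih]; push_cast; ring

lemma systematic_sub_cyclic_eq (k : ℕ) (x : ℝ) :
    (2 * (((k + 2 : ℕ) : ℝ) - 1) / (k + 2 : ℕ)) * x * (1 + (((k + 2 : ℕ) : ℝ) - 2) / 2 * x) -
        ∑ u ∈ Finset.Icc 1 (k + 2 - 1), (2 * (((k + 2 : ℕ) : ℝ) - u) / (k + 2 : ℕ)) * x ^ u =
      2 / ((k : ℝ) + 2) * ∑ j ∈ Finset.range k, ((k : ℝ) - j) * (x ^ 2 - x ^ (j + 2)) := by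
  have hsum : ∑ u ∈ Finset.Icc 1 (k + 2 - 1),
        (2 * (((k + 2 : ℕ) : ℝ) - u) / (k + 2 : ℕ)) * x ^ u =
      2 / ((k : ℝ) + 2) *
        (∑ j ∈ Finset.range k, ((k : ℝ) - j) * x ^ (j + 2) + ((k : ℝ) + 1) * x) := by
    have hI : Finset.Icc 1 (k + 2 - 1) = Finset.Ico 1 (k + 2) := by
      ext u; simp only [Finset.mem_Icc, Finset.mem_Ico]; omega
    rw [hI, Finset.sum_Ico_eq_sum_range, show k + 2 - 1 = k + 1 by omega,
      Finset.sum_range_succ', mul_add, Finset.mul_sum]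
    congr 1
    · refine Finset.sum_congr rfl fun j _ => ?_
      rw [show 1 + (j + 1) = j + 2 by omega]
      push_cast
      ring
    · push_cast
      ring
  have hgauss := sum_range_const_sub k k
  rw [hsum]
  simp only [mul_sub, Finset.sum_sub_distrib]
  simp only [← mul_sub, ← Finset.sum_mul, hgauss]
  push_cast
  ring

/-- For an integer `n > 3`, with
`P_s(x) = (2(n-1)/n) x (1 + ((n-2)/2) x)` (systematic form) and
`P_c(x) = Σ_{u=1}^{n-1} (2(n-u)/n) x^u` (cyclic form), one has
`P_s(x) − P_c(x) > 0` for `0 < x < 1`, `P_s(1) − P_c(1) = 0`, and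
`P_s(x) − P_c(x) < 0` for `x > 1`. -/
theorem spc_systematic_vs_cyclic_polynomial (n : ℕ) (hn : 3 < n) :
    (∀ x : ℝ, 0 < x → x < 1 →
        0 < (2 * ((n : ℝ) - 1) / n) * x * (1 + ((n : ℝ) - 2) / 2 * x) -
            ∑ u ∈ Finset.Icc 1 (n - 1), (2 * ((n : ℝ) - u) / n) * x ^ u) ∧
      ((2 * ((n : ℝ) - 1) / n) * 1 * (1 + ((n : ℝ) - 2) / 2 * 1) -
          ∑ u ∈ Finset.Icc 1 (n - 1), (2 * ((n : ℝ) - u) / n) * (1 : ℝ) ^ u = 0) ∧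
      ∀ x : ℝ, 1 < x →
        (2 * ((n : ℝ) - 1) / n) * x * (1 + ((n : ℝ) - 2) / 2 * x) -
            ∑ u ∈ Finset.Icc 1 (n - 1), (2 * ((n : ℝ) - u) / n) * x ^ u < 0 := by
  obtain ⟨k, rfl⟩ : ∃ k, n = k + 2 := ⟨n - 2, by omega⟩
  have hk : 1 < k := by omega
  have hc : (0 : ℝ) < 2 / ((k : ℝ) + 2) := by positivity
  have hw : ∀ j ∈ Finset.range k, (0 : ℝ) < (k : ℝ) - j := fun j hj =>
    sub_pos.2 (by exact_mod_cast Finset.mem_range.1 hj)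
  -- The degree-two term `j = 0` of the difference vanishes; `j = 1` gives strictness.
  have h1 : 1 ∈ Finset.range k := Finset.mem_range.2 hk
  refine ⟨fun x hx0 hx1 => ?_, ?_, fun x hx => ?_⟩
  · rw [systematic_sub_cyclic_eq]
    refine mul_pos hc (Finset.sum_pos' (fun j hj => mul_nonneg (hw j hj).le ?_)
      ⟨1, h1, mul_pos (hw 1 h1) ?_⟩)
    · exact sub_nonneg.2 (pow_le_pow_of_le_one hx0.le hx1.le (by omega))
    · exact sub_pos.2 (pow_lt_pow_right_of_lt_one₀ hx0 hx1 (by omega))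
  · rw [systematic_sub_cyclic_eq]
    simp
  · rw [systematic_sub_cyclic_eq]
    refine mul_neg_of_pos_of_neg hc (Finset.sum_neg' (fun j hj =>
      mul_nonpos_of_nonneg_of_nonpos (hw j hj).le ?_)
      ⟨1, h1, mul_neg_of_pos_of_neg (hw 1 h1) ?_⟩)
    · exact sub_nonpos.2 (pow_le_pow_right₀ hx.le (by omega))
    · exact sub_neg.2 (pow_lt_pow_right₀ hx (by omega))
end
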